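/- There exists an absolute constant C > 0 with the following property. Let q ≥ 1 and let d, N ∈ ℕ satisfy N^{−11} ≤ κ_q(d,N) ≤ e^{−12/q}. Then for every integer k > 1, the number of points x ∈ B_N^q ∩ ℤ^d such that |{i ∈ [d] : |x_i| = k}| ≥ κ_q(d,N)^{q/22}·N^q / k^6 is at most C·N^{−2q}·|B_N^q ∩ ℤ^d|. -/

import Mathlib

open Classical in
noncomputable def latticeBall (q : ℝ) (d : ℕ) (t : ℝ) : Finset (Fin d → ℤ) :=
  (Finset.Icc (fun _ => -(⌈t⌉₊ : ℤ)) (fun _ => (⌈t⌉₊ : ℤ))).filter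
    (fun x => ∑ i, |(x i : ℝ)| ^ q ≤ t ^ q)

/-!
Write `X = N ^ q` and `δ = κ ^ (q / 22)`, so that `X = δ ^ 22 * d`. A point with at least `n`
coordinates `±k` is compared with generic points of the ball by switching one coordinate at a time.
Turning `±k` into `0`, `n` times in a row, frees `n * k ^ q ≥ n * k` units of the budget `X`, at the
cost of a factor `(2 * d) ^ n / n!`. The freed budget is then spent on turning zeros into ones: a
point of the ball has at least `d - X` zeros but at most `X` ones, so each of the `n * k` switches
gains a factor `X / (d - X) ≤ 2 * δ ^ 22`. When `n` is at least the threshold `δ * X / k ^ 6`, gain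
and cost together amount to at most `exp (-(k * n))`, and `X ≤ (δ * X) ^ 2 ≤ (k * n) ^ 12` bounds
this by a constant times `X ^ (-2)`.
-/

section

open Finset Function

section Update

variable {ι α : Type*} [Fintype ι] [DecidableEq ι] [DecidableEq α]

lemma card_mul_le_card_mul_of_update_mem {A B : Finset (ι → α)} {V : Finset α} {w : α} {m n : ℕ}
    (hw : w ∉ V) (hA : ∀ x ∈ A, m ≤ #{i | x i ∈ V})
    (hAB : ∀ x ∈ A, ∀ i, x i ∈ V → update x i w ∈ B) (hB : ∀ z ∈ B, #{i | z i = w} ≤ n) :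
    #A * m ≤ #B * (n * #V) := by
  classical
  refine card_mul_le_card_mul (fun x z => ∃ i, x i ∈ V ∧ update x i w = z) (fun x hx => ?_)
    (fun z hz => ?_)
  · have update_injOn : Set.InjOn (fun i => update x i w) {i | x i ∈ V} := by
      intro i hi j _ hij
      by_contra hne
      have hwi : w = x i := by simpa [hne] using congrFun hij i
      exact hw (hwi ▸ hi)
    refine (hA x hx).trans (card_le_card_of_injOn (fun i => update x i w) ?_ (by simpa))
    intro i hi
    have hxi : x i ∈ V := by simpa using hi
    simpa [bipartiteAbove] using ⟨hAB x hx i hxi, i, hxi, rfl⟩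
  · have below_subset : A.bipartiteBelow (fun x z => ∃ i, x i ∈ V ∧ update x i w = z) z ⊆
        (({i | z i = w} : Finset ι) ×ˢ V).image fun p => update z p.1 p.2 := by
      intro x hx
      obtain ⟨-, i, hi, rfl⟩ := (mem_bipartiteBelow _).1 hx
      exact mem_image.2 ⟨(i, x i), by simpa using hi, by simp⟩
    calc #(A.bipartiteBelow _ z) ≤ #(({i | z i = w} : Finset ι) ×ˢ V) :=
          (card_le_card below_subset).trans card_image_le
      _ = #{i | z i = w} * #V := card_product _ _
      _ ≤ n * #V := by gcongr; exact hB z hz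

end Update

section PowSum

variable {ι : Type*} [Fintype ι] {q : ℝ}

/-- The `q`-th power `∑ i, |x i| ^ q` of the `ℓ^q` norm of an integer vector: the budget that `x`
uses up in a ball of radius `t`, where `t ^ q` is available. -/
noncomputable def powSum (q : ℝ) (x : ι → ℤ) : ℝ := ∑ i, |(x i : ℝ)| ^ q

lemma abs_rpow_le_powSum (q : ℝ) (x : ι → ℤ) (i : ι) : |(x i : ℝ)| ^ q ≤ powSum q x :=
  single_le_sum (f := fun i => |(x i : ℝ)| ^ q) (fun _ _ => by positivity) (mem_univ i)

lemma powSum_update [DecidableEq ι] (q : ℝ) (x : ι → ℤ) (i : ι) (a : ℤ) :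
    powSum q (update x i a) + |(x i : ℝ)| ^ q = powSum q x + |(a : ℝ)| ^ q := by
  have sum_off (y : ι → ℤ) : powSum q y = |(y i : ℝ)| ^ q + ∑ j ∈ univ.erase i, |(y j : ℝ)| ^ q :=
    (add_sum_erase univ _ (mem_univ i)).symm
  have off_eq : ∑ j ∈ univ.erase i, |(update x i a j : ℝ)| ^ q =
      ∑ j ∈ univ.erase i, |(x j : ℝ)| ^ q :=
    sum_congr rfl fun j hj => by rw [update_of_ne (ne_of_mem_erase hj)]
  rw [sum_off, sum_off x, off_eq, update_self]
  ring

lemma card_ne_zero_le_powSum (hq : 0 ≤ q) (x : ι → ℤ) : (#{i | x i ≠ 0} : ℝ) ≤ powSum q x := by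
  rw [natCast_card_filter]
  refine sum_le_sum fun i _ => ?_
  split_ifs with hi
  · exact Real.one_le_rpow (mod_cast Int.one_le_abs hi) hq
  · positivity

end PowSum

section RoomyBall

variable {q t r : ℝ} {d : ℕ} {x : Fin d → ℤ}

lemma mem_latticeBall (hq : 0 < q) (ht : 0 ≤ t) : x ∈ latticeBall q d t ↔ powSum q x ≤ t ^ q := by
  refine mem_filter.trans ⟨And.right, fun h => ⟨?_, h⟩⟩
  have abs_le_ceil (i : Fin d) : |x i| ≤ (⌈t⌉₊ : ℤ) := by
    have : |(x i : ℝ)| ≤ t :=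
      (Real.rpow_le_rpow_iff (abs_nonneg _) ht hq).1 ((abs_rpow_le_powSum q x i).trans h)
    exact_mod_cast this.trans (Nat.le_ceil t)
  exact mem_Icc.2 ⟨fun i => (abs_le.1 (abs_le_ceil i)).1, fun i => (abs_le.1 (abs_le_ceil i)).2⟩

/-- The points of the ball of radius `t` that leave at least `r` of the budget `t ^ q` unused. -/
noncomputable def roomyBall (q : ℝ) (d : ℕ) (t r : ℝ) : Finset (Fin d → ℤ) :=
  {x ∈ latticeBall q d t | powSum q x + r ≤ t ^ q}

lemma mem_roomyBall (hq : 0 < q) (ht : 0 ≤ t) (hr : 0 ≤ r) :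
    x ∈ roomyBall q d t r ↔ powSum q x + r ≤ t ^ q := by
  rw [roomyBall, mem_filter, mem_latticeBall hq ht, and_iff_right_iff_imp]
  exact fun h => by linarith

lemma roomyBall_zero (q : ℝ) (d : ℕ) (t : ℝ) : roomyBall q d t 0 = latticeBall q d t :=
  filter_true_of_mem fun _ hx => by simpa [powSum] using (mem_filter.1 hx).2

lemma roomyBall_anti (q : ℝ) (d : ℕ) (t : ℝ) : Antitone (roomyBall q d t) :=
  fun _ _ hrs => monotone_filter_right _ fun _ _ hx => by linarith

lemma card_ne_zero_le_floor (hq : 0 < q) (ht : 0 ≤ t) (hr : 0 ≤ r) (hx : x ∈ roomyBall q d t r) :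
    #{i | x i ≠ 0} ≤ ⌊t ^ q⌋₊ := by
  refine Nat.le_floor ((card_ne_zero_le_powSum hq.le x).trans ?_)
  linarith [(mem_roomyBall hq ht hr).1 hx]

lemma sub_floor_le_card_eq_zero (hq : 0 < q) (ht : 0 ≤ t) (hr : 0 ≤ r)
    (hx : x ∈ roomyBall q d t r) : d - ⌊t ^ q⌋₊ ≤ #{i | x i = 0} := by
  have card_add := card_filter_add_card_filter_not (s := (univ : Finset (Fin d))) (x · = 0)
  rw [card_univ, Fintype.card_fin] at card_add
  have := card_ne_zero_le_floor hq ht hr hx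
  lia

lemma card_roomyBall_add_one_mul_le (hq : 0 < q) (ht : 0 ≤ t) (hr : 0 ≤ r) :
    #(roomyBall q d t (r + 1)) * (d - ⌊t ^ q⌋₊) ≤ #(roomyBall q d t r) * ⌊t ^ q⌋₊ := by
  have hr' : 0 ≤ r + 1 := by positivity
  suffices #(roomyBall q d t (r + 1)) * (d - ⌊t ^ q⌋₊) ≤
      #(roomyBall q d t r) * (⌊t ^ q⌋₊ * #({0} : Finset ℤ)) by simpa using this
  refine card_mul_le_card_mul_of_update_mem (w := 1) (by simp) ?_ ?_ ?_
  · simpa using fun x hx => sub_floor_le_card_eq_zero hq ht hr' hx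
  · intro x hx i hi
    have spend := powSum_update q x i 1
    rw [mem_singleton.1 hi] at spend
    rw [mem_roomyBall hq ht hr'] at hx
    rw [mem_roomyBall hq ht hr]
    simp only [Int.cast_zero, abs_zero, Real.zero_rpow hq.ne', Int.cast_one, abs_one,
      Real.one_rpow] at spend
    linarith
  · intro z hz
    refine le_trans (card_le_card ?_) (card_ne_zero_le_floor hq ht hr hz)
    exact monotone_filter_right _ fun i _ hi => by simp [hi]

lemma card_roomyBall_mul_pow_le (hq : 0 < q) (ht : 0 ≤ t) (d s : ℕ) :
    #(roomyBall q d t s) * (d - ⌊t ^ q⌋₊) ^ s ≤ #(latticeBall q d t) * ⌊t ^ q⌋₊ ^ s := by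
  induction s with
  | zero => simp [roomyBall_zero]
  | succ s ih =>
    push_cast
    calc #(roomyBall q d t (s + 1)) * (d - ⌊t ^ q⌋₊) ^ (s + 1)
        = #(roomyBall q d t (s + 1)) * (d - ⌊t ^ q⌋₊) * (d - ⌊t ^ q⌋₊) ^ s := by ring
      _ ≤ #(roomyBall q d t s) * ⌊t ^ q⌋₊ * (d - ⌊t ^ q⌋₊) ^ s := by
          gcongr ?_ * _
          exact card_roomyBall_add_one_mul_le hq ht s.cast_nonneg
      _ = #(roomyBall q d t s) * (d - ⌊t ^ q⌋₊) ^ s * ⌊t ^ q⌋₊ := by ring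
      _ ≤ #(latticeBall q d t) * ⌊t ^ q⌋₊ ^ s * ⌊t ^ q⌋₊ := by gcongr
      _ = #(latticeBall q d t) * ⌊t ^ q⌋₊ ^ (s + 1) := by ring

lemma card_roomyBall_le (hq : 0 < q) (ht : 0 ≤ t) (hd : 0 < d) (htd : t ^ q ≤ d / 2) (s : ℕ) :
    (#(roomyBall q d t s) : ℝ) ≤ #(latticeBall q d t) * (2 * (t ^ q / d)) ^ s := by
  have floor_le : (⌊t ^ q⌋₊ : ℝ) ≤ t ^ q := Nat.floor_le (by positivity)
  have half_le : (d / 2 : ℝ) ≤ (d - ⌊t ^ q⌋₊ : ℕ) := by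
    have : (d : ℝ) ≤ (d - ⌊t ^ q⌋₊ : ℕ) + ⌊t ^ q⌋₊ := mod_cast le_tsub_add
    linarith
  have : (0 : ℝ) < d := mod_cast hd
  refine le_of_mul_le_mul_right ?_ (show (0 : ℝ) < (d / 2) ^ s by positivity)
  calc (#(roomyBall q d t s) : ℝ) * (d / 2) ^ s
      ≤ #(roomyBall q d t s) * (d - ⌊t ^ q⌋₊ : ℕ) ^ s := by gcongr
    _ ≤ #(latticeBall q d t) * ⌊t ^ q⌋₊ ^ s := mod_cast card_roomyBall_mul_pow_le hq ht d s
    _ ≤ #(latticeBall q d t) * (t ^ q) ^ s := by gcongr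
    _ = #(latticeBall q d t) * (2 * (t ^ q / d)) ^ s * (d / 2) ^ s := by
        rw [mul_assoc, ← mul_pow]
        field_simp

end RoomyBall

section FrequentBall

variable {q t r : ℝ} {d k n : ℕ}

/-- The points of `roomyBall q d t r` at least `n` of whose coordinates have absolute value `k`. -/
noncomputable def frequentBall (q : ℝ) (d : ℕ) (t r : ℝ) (k n : ℕ) : Finset (Fin d → ℤ) :=
  {x ∈ roomyBall q d t r | n ≤ #{i | |x i| = (k : ℤ)}}

lemma le_card_abs_update_zero {ι : Type*} [Fintype ι] [DecidableEq ι] {x : ι → ℤ}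
    (hx : n + 1 ≤ #{i | |x i| = (k : ℤ)}) (i : ι) : n ≤ #{j | |update x i 0 j| = (k : ℤ)} := by
  have erase_subset : ({j | |x j| = (k : ℤ)} : Finset ι).erase i ⊆
      ({j | |update x i 0 j| = (k : ℤ)} : Finset ι) := by
    intro j hj
    have hne : j ≠ i := ne_of_mem_erase hj
    simpa [hne] using hj
  have := pred_card_le_card_erase (s := ({j | |x j| = (k : ℤ)} : Finset ι)) (a := i)
  have := card_le_card erase_subset
  lia

lemma card_frequentBall_succ_mul_le (hq : 0 < q) (ht : 0 ≤ t) (hr : 0 ≤ r) (hk : k ≠ 0) :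
    #(frequentBall q d t r k (n + 1)) * (n + 1) ≤
      #(frequentBall q d t (r + (k : ℝ) ^ q) k n) * (2 * d) := by
  have mem_pair (a : ℤ) : a ∈ ({(k : ℤ), -(k : ℤ)} : Finset ℤ) ↔ |a| = k := by
    rw [mem_insert, mem_singleton, abs_eq k.cast_nonneg]
  have card_pair : #({(k : ℤ), -(k : ℤ)} : Finset ℤ) ≤ 2 := card_le_two
  rw [mul_comm 2 d]
  refine le_trans (card_mul_le_card_mul_of_update_mem (w := 0) (n := d)
    (V := {(k : ℤ), -(k : ℤ)}) ?_ ?_ ?_ ?_) (by gcongr)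
  · rw [mem_pair, abs_zero]
    exact_mod_cast hk.symm
  · intro x hx
    simpa only [mem_pair] using (mem_filter.1 hx).2
  · intro x hx i hi
    obtain ⟨hroom, hfreq⟩ := mem_filter.1 hx
    have habs : |(x i : ℝ)| = k := mod_cast (mem_pair _).1 hi
    have free := powSum_update q x i 0
    rw [habs, Int.cast_zero, abs_zero, Real.zero_rpow hq.ne'] at free
    rw [mem_roomyBall hq ht hr] at hroom
    refine mem_filter.2 ⟨?_, le_card_abs_update_zero hfreq i⟩
    rw [mem_roomyBall hq ht (by positivity)]
    linarith
  · exact fun z _ => (card_le_univ _).trans_eq (Fintype.card_fin d)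

lemma card_frequentBall_mul_factorial_le (hq : 0 < q) (ht : 0 ≤ t) (hr : 0 ≤ r) (hk : k ≠ 0) :
    #(frequentBall q d t r k n) * n.factorial ≤
      #(roomyBall q d t (r + n * (k : ℝ) ^ q)) * (2 * d) ^ n := by
  induction n generalizing r with
  | zero => simp [frequentBall]
  | succ n ih =>
    calc #(frequentBall q d t r k (n + 1)) * (n + 1).factorial
        = #(frequentBall q d t r k (n + 1)) * (n + 1) * n.factorial := by
          rw [Nat.factorial_succ]; ring
      _ ≤ #(frequentBall q d t (r + (k : ℝ) ^ q) k n) * (2 * d) * n.factorial := by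
          gcongr ?_ * _
          exact card_frequentBall_succ_mul_le hq ht hr hk
      _ = #(frequentBall q d t (r + (k : ℝ) ^ q) k n) * n.factorial * (2 * d) := by ring
      _ ≤ #(roomyBall q d t (r + (k : ℝ) ^ q + n * (k : ℝ) ^ q)) * (2 * d) ^ n * (2 * d) := by
          gcongr ?_ * _
          exact ih (by positivity)
      _ = #(roomyBall q d t (r + (n + 1 : ℕ) * (k : ℝ) ^ q)) * (2 * d) ^ (n + 1) := by
          rw [mul_assoc, ← pow_succ]
          push_cast
          ring_nf

lemma card_frequentBall_le (hq : 1 ≤ q) (ht : 0 ≤ t) (hd : 0 < d) (htd : t ^ q ≤ d / 2)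
    (hk : k ≠ 0) :
    (#(frequentBall q d t 0 k n) : ℝ) ≤
      (2 * d * (2 * (t ^ q / d)) ^ k) ^ n / n.factorial * #(latticeBall q d t) := by
  have hq0 : 0 < q := by linarith
  have freed_room : ((n * k : ℕ) : ℝ) ≤ 0 + n * (k : ℝ) ^ q := by
    have : (k : ℝ) ≤ (k : ℝ) ^ q :=
      Real.self_le_rpow_of_one_le (mod_cast Nat.one_le_iff_ne_zero.2 hk) hq
    push_cast
    rw [zero_add]
    gcongr
  rw [div_mul_eq_mul_div, le_div_iff₀ (by positivity)]
  calc (#(frequentBall q d t 0 k n) : ℝ) * n.factorial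
      ≤ #(roomyBall q d t (0 + n * (k : ℝ) ^ q)) * (2 * d) ^ n :=
        mod_cast card_frequentBall_mul_factorial_le hq0 ht le_rfl hk
    _ ≤ #(roomyBall q d t (n * k : ℕ)) * (2 * d) ^ n := by
        gcongr
        exact roomyBall_anti q d t freed_room
    _ ≤ #(latticeBall q d t) * (2 * (t ^ q / d)) ^ (n * k) * (2 * d) ^ n := by
        gcongr
        exact card_roomyBall_le hq0 ht hd htd (n * k)
    _ = (2 * d * (2 * (t ^ q / d)) ^ k) ^ n * #(latticeBall q d t) := by
        rw [mul_pow (2 * (d : ℝ)), ← pow_mul, mul_comm k n]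
        ring

end FrequentBall

end

section Estimates

open Real

lemma two_mul_pow_six_le_exp {x : ℝ} (hx : 0 ≤ x) : 2 * x ^ 6 ≤ exp (3 * x - 1) := by
  have half_le : x / 2 ≤ exp ((x - 2) / 2) := by linarith [add_one_le_exp ((x - 2) / 2)]
  have le_exp_five : (128 : ℝ) ≤ exp 5 := by
    calc (128 : ℝ) ≤ 2.7 ^ 5 := by norm_num
      _ ≤ exp 1 ^ 5 := by gcongr; linarith [exp_one_gt_d9]
      _ = exp 5 := by rw [← exp_nat_mul]; norm_num
  calc 2 * x ^ 6 = 128 * (x / 2) ^ 6 := by ring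
    _ ≤ exp 5 * exp ((x - 2) / 2) ^ 6 := by gcongr
    _ = exp (3 * x - 1) := by
        rw [← exp_nat_mul, ← exp_add]
        push_cast
        ring_nf

lemma pow_mul_le_pow_mul_exp {δ : ℝ} (h0 : 0 ≤ δ) (hδ : δ ≤ exp (-(6 / 11))) {k : ℕ}
    (hk : 2 ≤ k) : δ ^ (22 * k) ≤ δ ^ 23 * exp (-(5 * k)) := by
  have h1 : δ ≤ 1 := hδ.trans (exp_le_one_iff.2 (by norm_num))
  calc δ ^ (22 * k) ≤ δ ^ (23 + 10 * k) := pow_le_pow_of_le_one h0 h1 (by lia)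
    _ = δ ^ 23 * δ ^ (10 * k) := pow_add _ _ _
    _ ≤ δ ^ 23 * exp (-(6 / 11)) ^ (10 * k) := by gcongr
    _ ≤ δ ^ 23 * exp (-(5 * k)) := by
        rw [← exp_nat_mul]
        gcongr
        push_cast
        linarith [k.cast_nonneg (α := ℝ)]

lemma two_mul_two_mul_pow_le {δ : ℝ} (h0 : 0 ≤ δ) (hδ : δ ≤ exp (-(6 / 11))) {k : ℕ}
    (hk : 2 ≤ k) : 2 * (2 * δ ^ 22) ^ k ≤ δ ^ 23 / k ^ 6 * exp (-(k + 1)) := by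
  have two_pow_le : (2 : ℝ) ^ k ≤ exp k := by
    rw [← exp_one_pow]
    gcongr
    linarith [add_one_le_exp (1 : ℝ)]
  rw [div_mul_eq_mul_div, le_div_iff₀ (by positivity)]
  calc 2 * (2 * δ ^ 22) ^ k * k ^ 6 = 2 * k ^ 6 * 2 ^ k * δ ^ (22 * k) := by
        rw [mul_pow, ← pow_mul]
        ring
    _ ≤ exp (3 * k - 1) * exp k * (δ ^ 23 * exp (-(5 * k))) := by
        gcongr
        · exact two_mul_pow_six_le_exp k.cast_nonneg
        · exact pow_mul_le_pow_mul_exp h0 hδ hk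
    _ = δ ^ 23 * (exp (3 * k - 1) * exp k * exp (-(5 * k))) := by ring
    _ = δ ^ 23 * exp (-(k + 1)) := by
        rw [← exp_add, ← exp_add]
        ring_nf

lemma pow_div_factorial_le_exp_neg {a b : ℝ} {n : ℕ} (ha : 0 ≤ a) (hab : a ≤ n * exp (-(b + 1))) :
    a ^ n / n.factorial ≤ exp (-(b * n)) := by
  calc a ^ n / n.factorial ≤ (n * exp (-(b + 1))) ^ n / n.factorial := by gcongr
    _ = n ^ n / n.factorial * exp (-(b + 1)) ^ n := by
        rw [mul_pow, div_mul_eq_mul_div]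
    _ ≤ exp n * exp (-(b + 1)) ^ n := by
        gcongr
        exact pow_div_factorial_le_exp _ n.cast_nonneg n
    _ = exp (-(b * n)) := by
        rw [← exp_nat_mul, ← exp_add]
        ring_nf

lemma card_frequentBall_le_exp {q t δ : ℝ} {d k n : ℕ} (hq : 1 ≤ q) (ht : 0 ≤ t) (hd : 0 < d)
    (hk : 2 ≤ k) (h0 : 0 ≤ δ) (hδ : δ ≤ exp (-(6 / 11))) (hδt : δ ^ 22 = t ^ q / d)
    (hn : δ * t ^ q / k ^ 6 ≤ n) :
    ((frequentBall q d t 0 k n).card : ℝ) ≤ exp (-(k * n)) * (latticeBall q d t).card := by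
  have : (0 : ℝ) < d := mod_cast hd
  have ht_eq : t ^ q = δ ^ 22 * d := by rw [hδt]; field_simp
  have htd : t ^ q ≤ d / 2 := by
    have : δ ^ 22 ≤ 1 / 2 := by
      calc δ ^ 22 ≤ exp (-(6 / 11)) ^ 22 := by gcongr
        _ = (exp 12)⁻¹ := by rw [← exp_nat_mul, ← exp_neg]; norm_num
        _ ≤ 2⁻¹ := by gcongr; linarith [add_one_le_exp (12 : ℝ)]
        _ = 1 / 2 := by norm_num
    rw [ht_eq]
    nlinarith
  refine (card_frequentBall_le hq ht hd htd (by lia)).trans ?_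
  refine mul_le_mul_of_nonneg_right ?_ (Nat.cast_nonneg _)
  refine pow_div_factorial_le_exp_neg (by positivity) ?_
  calc 2 * d * (2 * (t ^ q / d)) ^ k = d * (2 * (2 * δ ^ 22) ^ k) := by rw [← hδt]; ring
    _ ≤ d * (δ ^ 23 / k ^ 6 * exp (-(k + 1))) := by
        gcongr (d : ℝ) * ?_
        exact two_mul_two_mul_pow_le h0 hδ hk
    _ = δ * t ^ q / k ^ 6 * exp (-(k + 1)) := by rw [ht_eq]; ring
    _ ≤ n * exp (-(k + 1)) := by gcongr

lemma exp_neg_le_factorial_mul_inv_sq {X δ : ℝ} (hX : 0 < X) (h0 : 0 ≤ δ) (hδX : 1 ≤ δ ^ 2 * X)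
    {k n : ℕ} (hk : 0 < k) (hn : δ * X / k ^ 6 ≤ n) :
    exp (-(k * n)) ≤ Nat.factorial 24 * (X ^ 2)⁻¹ := by
  have hδX6 : δ * X ≤ (k * n : ℝ) ^ 6 := by
    rw [div_le_iff₀ (by positivity)] at hn
    have : (n : ℝ) ≤ n ^ 6 := mod_cast Nat.le_self_pow (by norm_num) n
    calc δ * X ≤ n * k ^ 6 := hn
      _ ≤ n ^ 6 * k ^ 6 := by gcongr
      _ = (k * n : ℝ) ^ 6 := by ring
  have hX12 : X ≤ (k * n : ℝ) ^ 12 := by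
    calc X ≤ δ ^ 2 * X * X := le_mul_of_one_le_left hX.le hδX
      _ = (δ * X) ^ 2 := by ring
      _ ≤ ((k * n : ℝ) ^ 6) ^ 2 := by gcongr
      _ = (k * n : ℝ) ^ 12 := by ring
  rw [exp_neg, ← div_eq_mul_inv, inv_le_comm₀ (exp_pos _) (by positivity), inv_div]
  calc X ^ 2 / Nat.factorial 24 ≤ ((k * n : ℝ) ^ 12) ^ 2 / Nat.factorial 24 := by gcongr
    _ = (k * n : ℝ) ^ 24 / Nat.factorial 24 := by rw [← pow_mul]
    _ ≤ exp (k * n) := pow_div_factorial_le_exp _ (by positivity) 24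

end Estimates

section Kappa

variable {κ q t : ℝ}

lemma rpow_div_pow_twentyTwo {d : ℕ} (hq : q ≠ 0) (ht : 0 ≤ t) :
    ((t / (d : ℝ) ^ (1 / q)) ^ (q / 22)) ^ 22 = t ^ q / d := by
  rw [← Real.rpow_mul_natCast (by positivity), Nat.cast_ofNat, div_mul_cancel₀ q (by norm_num),
    Real.div_rpow ht (by positivity), one_div, Real.rpow_inv_rpow d.cast_nonneg hq]

lemma rpow_div_twentyTwo_le_exp (hq : 0 < q) (hκ : 0 ≤ κ) (h : κ ≤ Real.exp (-12 / q)) :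
    κ ^ (q / 22) ≤ Real.exp (-(6 / 11)) := by
  calc κ ^ (q / 22) ≤ Real.exp (-12 / q) ^ (q / 22) := by gcongr
    _ = Real.exp (-(6 / 11)) := by
        rw [← Real.exp_mul]
        field_simp
        norm_num

lemma one_le_sq_mul_rpow (hq : 0 ≤ q) (ht : 0 < t) (h : t ^ (-(11 : ℝ)) ≤ κ) :
    1 ≤ (κ ^ (q / 22)) ^ 2 * t ^ q := by
  calc 1 = ((t ^ (-(11 : ℝ))) ^ (q / 22)) ^ 2 * t ^ q := by
        rw [← Real.rpow_mul ht.le, ← Real.rpow_mul_natCast ht.le, ← Real.rpow_add ht]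
        ring_nf
        rw [Real.rpow_zero]
    _ ≤ (κ ^ (q / 22)) ^ 2 * t ^ q := by gcongr

end Kappa

open Classical in
theorem stmt7 :
    ∃ C : ℝ, 0 < C ∧ ∀ (q : ℝ), 1 ≤ q → ∀ d N : ℕ, 0 < d → 0 < N →
      (N : ℝ) ^ (-(11 : ℝ)) ≤ (N : ℝ) / (d : ℝ) ^ (1 / q) →
      (N : ℝ) / (d : ℝ) ^ (1 / q) ≤ Real.exp (-12 / q) →
      ∀ k : ℕ, 1 < k →
      (((latticeBall q d N).filter (fun x =>
          ((N : ℝ) / (d : ℝ) ^ (1 / q)) ^ (q / 22) * (N : ℝ) ^ q / (k : ℝ) ^ 6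
            ≤ ((Finset.univ.filter (fun i => |x i| = (k : ℤ))).card : ℝ))).card : ℝ)
        ≤ C * (N : ℝ) ^ (-(2 * q)) * ((latticeBall q d N).card : ℝ) := by
  refine ⟨Nat.factorial 24, by positivity, fun q hq d N hd hN hlo hhi k hk => ?_⟩
  have hq0 : 0 < q := by linarith
  have hN0 : (0 : ℝ) < N := mod_cast hN
  set δ : ℝ := ((N : ℝ) / (d : ℝ) ^ (1 / q)) ^ (q / 22)
  have hδ0 : 0 ≤ δ := by positivity
  have hδ22 : δ ^ 22 = (N : ℝ) ^ q / d := rpow_div_pow_twentyTwo hq0.ne' hN0.le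
  have hδ_le : δ ≤ Real.exp (-(6 / 11)) := rpow_div_twentyTwo_le_exp hq0 (by positivity) hhi
  have hδN : 1 ≤ δ ^ 2 * (N : ℝ) ^ q := one_le_sq_mul_rpow hq0.le hN0 hlo
  set n := ⌈δ * (N : ℝ) ^ q / (k : ℝ) ^ 6⌉₊
  have hn : δ * (N : ℝ) ^ q / (k : ℝ) ^ 6 ≤ n := Nat.le_ceil _
  have hN2 : (N : ℝ) ^ (-(2 * q)) = (((N : ℝ) ^ q) ^ 2)⁻¹ := by
    rw [Real.rpow_neg hN0.le, mul_comm, Real.rpow_mul hN0.le, Real.rpow_two]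
  calc _ ≤ ((frequentBall q d N 0 k n).card : ℝ) := by
        rw [frequentBall, roomyBall_zero]
        gcongr
        exact fun hx => Nat.ceil_le.2 hx
    _ ≤ Real.exp (-(k * n)) * (latticeBall q d N).card :=
        card_frequentBall_le_exp hq hN0.le hd hk hδ0 hδ_le hδ22 hn
    _ ≤ Nat.factorial 24 * (N : ℝ) ^ (-(2 * q)) * (latticeBall q d N).card := by
        rw [hN2]
        gcongr
        exact exp_neg_le_factorial_mul_inv_sq (by positivity) hδ0 hδN (by lia) hn
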